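/- Let n ≥ 3 be an integer and set γ = n/(n−2). For every c ≥ 0 there is a constant A₂ > 0, depending only on n and c, such that: for every x ∈ ℝⁿ, every 0 < r < R ≤ 1 and every smooth nonnegative function f on an open set containing the closed ball B̄(x,R) satisfying −Δf ≤ c·f pointwise on B(x,R), one has (∫_{B(x,r)} f^{2γ} dx)^{1/γ} ≤ (A₂/(R−r)²) ∫_{B(x,R)} f² dx. -/

import Mathlib

open MeasureTheory Metric

/-- The Euclidean (analyst's) Laplacian `Δf = ∑ i ∂²f/∂xᵢ²`. -/
noncomputable def lap {n : ℕ} (f : EuclideanSpace ℝ (Fin n) → ℝ)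
    (x : EuclideanSpace ℝ (Fin n)) : ℝ :=
  ∑ i : Fin n,
    fderiv ℝ (fun y => fderiv ℝ f y (EuclideanSpace.single i 1)) x (EuclideanSpace.single i 1)

/-!
Let `φ` be a radial cutoff that is `1` on `B(x, r)`, is supported inside `B(x, R)` and has gradient
`O(1 / (R - r))`. Pointwise `|∇(φf)|² = ∇(φ²f) · ∇f + |∇φ|² f²`, and by Green's formula the first
term integrates to `∫ φ² f (-Δf) ≤ c ∫ φ² f²`. Hence `∫ |∇(φf)|² ≤ ∫ (c φ² + |∇φ|²) f²`, and the
Gagliardo–Nirenberg–Sobolev inequality for `φf`, which agrees with `f` on `B(x, r)`, concludes.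
No boundary regularity of `f` enters, because every integrand vanishes off the support of `φ`.
-/

section CompactSupport

theorem contDiff_mul_of_tsupport_subset {𝕜 E : Type*} [NontriviallyNormedField 𝕜]
    [NormedAddCommGroup E] [NormedSpace 𝕜 E] {V : Set E} {k : WithTop ℕ∞} {φ f : E → 𝕜}
    (hV : IsOpen V) (hφ : ContDiff 𝕜 k φ) (hφV : tsupport φ ⊆ V) (hf : ContDiffOn 𝕜 k f V) :
    ContDiff 𝕜 k fun y => φ y * f y := by
  refine (contMDiff_of_tsupport fun y hy => ?_).contDiff
  have hyV : y ∈ V := hφV (tsupport_mul_subset_left hy)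
  exact (hφ.contDiffAt.mul (hf.contDiffAt (hV.mem_nhds hyV))).contMDiffAt

theorem integrable_mul_of_tsupport_subset {X : Type*} [TopologicalSpace X] [MeasurableSpace X]
    [OpensMeasurableSpace X] {μ : Measure X} [IsFiniteMeasureOnCompacts μ] {V : Set X}
    {φ g : X → ℝ} (hV : IsOpen V) (hφ : Continuous φ) (hφc : HasCompactSupport φ)
    (hφV : tsupport φ ⊆ V) (hg : ContinuousOn g V) :
    Integrable (fun y => φ y * g y) μ :=
  ((hφ.continuousOn.mul hg).continuous_of_tsupport_subset hV
    (tsupport_mul_subset_left.trans hφV)).integrable_of_hasCompactSupport hφc.mul_right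

theorem setIntegral_rpow_le_integral_norm_rpow {X : Type*} [TopologicalSpace X]
    [MeasurableSpace X] [OpensMeasurableSpace X] {μ : Measure X} [IsFiniteMeasureOnCompacts μ]
    {B : Set X} {u f : X → ℝ} {q : ℝ} (hq : 0 < q) (hB : MeasurableSet B) (hu : Continuous u)
    (huc : HasCompactSupport u) (huf : Set.EqOn u f B) (hf : ∀ y ∈ B, 0 ≤ f y) :
    ∫ y in B, f y ^ q ∂μ ≤ ∫ y, ‖u y‖ ^ q ∂μ := by
  have hint : Integrable (fun y => ‖u y‖ ^ q) μ :=
    (hu.norm.rpow_const fun _ => Or.inr hq.le).integrable_of_hasCompactSupport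
      (huc.comp_left (g := fun t => ‖t‖ ^ q) (by simp [hq.ne']))
  calc ∫ y in B, f y ^ q ∂μ = ∫ y in B, ‖u y‖ ^ q ∂μ :=
        setIntegral_congr_fun hB fun y hy => by
          simp only [huf hy, Real.norm_of_nonneg (hf y hy)]
    _ ≤ ∫ y, ‖u y‖ ^ q ∂μ :=
        setIntegral_le_integral hint (Filter.Eventually.of_forall fun y => by positivity)

theorem integral_fderiv_mul_eq_neg_of_tsupport_subset {E : Type*} [NormedAddCommGroup E]
    [NormedSpace ℝ E] [FiniteDimensional ℝ E] [MeasurableSpace E] [BorelSpace E] {μ : Measure E}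
    [μ.IsAddHaarMeasure] {V : Set E} {w g : E → ℝ} (hV : IsOpen V) (hw : ContDiff ℝ 1 w)
    (hwc : HasCompactSupport w) (hwV : tsupport w ⊆ V) (hg : ContDiffOn ℝ 1 g V) (v : E) :
    ∫ y, fderiv ℝ w y v * g y ∂μ = -∫ y, w y * fderiv ℝ g y v ∂μ := by
  have hw' : Continuous fun y => fderiv ℝ w y v :=
    (hw.continuous_fderiv one_ne_zero).clm_apply continuous_const
  have hg' : ContinuousOn (fun y => fderiv ℝ g y v) V :=
    (hg.continuousOn_fderiv_of_isOpen hV le_rfl).clm_apply continuousOn_const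
  rw [integral_mul_fderiv_eq_neg_fderiv_mul_of_integrable, neg_neg]
  · exact integrable_mul_of_tsupport_subset hV hw' (hwc.fderiv_apply ℝ v)
      ((tsupport_fderiv_apply_subset ℝ v).trans hwV) hg.continuousOn
  · exact integrable_mul_of_tsupport_subset hV hw.continuous hwc hwV hg'
  · exact integrable_mul_of_tsupport_subset hV hw.continuous hwc hwV hg.continuousOn
  · exact fun y _ => hw.differentiable one_ne_zero y
  · exact fun y hy => (hg.differentiableOn one_ne_zero).differentiableAt (hV.mem_nhds (hwV hy))

end CompactSupport

section Gradient

open scoped Gradient InnerProductSpace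

variable {E : Type*} [NormedAddCommGroup E] [InnerProductSpace ℝ E] [CompleteSpace E]
  {φ f : E → ℝ} {y : E}

theorem norm_gradient (f : E → ℝ) (y : E) : ‖∇ f y‖ = ‖fderiv ℝ f y‖ :=
  (InnerProductSpace.toDual ℝ E).symm.norm_map _

theorem continuous_gradient (hf : ContDiff ℝ 1 f) : Continuous (∇ f) :=
  (InnerProductSpace.toDual ℝ E).symm.continuous.comp (hf.continuous_fderiv one_ne_zero)

theorem tsupport_norm_gradient_sq_subset : (tsupport fun y => ‖∇ f y‖ ^ 2) ⊆ tsupport f := by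
  simp only [norm_gradient]
  exact (tsupport_comp_subset (g := fun L => ‖L‖ ^ 2) (by simp) (fderiv ℝ f)).trans
    (tsupport_fderiv_subset ℝ)

theorem gradient_eq_zero_of_notMem_tsupport (hy : y ∉ tsupport f) : ∇ f y = 0 := by
  have hsq : ‖∇ f y‖ ^ 2 = 0 :=
    image_eq_zero_of_notMem_tsupport (f := fun z => ‖∇ f z‖ ^ 2) fun h =>
      hy (tsupport_norm_gradient_sq_subset h)
  simpa using hsq

theorem hasCompactSupport_norm_gradient_sq (hf : HasCompactSupport f) :
    HasCompactSupport fun y => ‖∇ f y‖ ^ 2 :=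
  hf.of_isClosed_subset (isClosed_tsupport _) tsupport_norm_gradient_sq_subset

theorem gradient_mul (hφ : DifferentiableAt ℝ φ y) (hf : DifferentiableAt ℝ f y) :
    ∇ (fun z => φ z * f z) y = φ y • ∇ f y + f y • ∇ φ y := by
  simp only [gradient, fderiv_fun_mul hφ hf, map_add, map_smul]

theorem norm_gradient_mul_sq (hφ : DifferentiableAt ℝ φ y) (hf : DifferentiableAt ℝ f y) :
    ‖∇ (fun z => φ z * f z) y‖ ^ 2 =
      ⟪∇ (fun z => φ z * (φ z * f z)) y, ∇ f y⟫_ℝ + ‖∇ φ y‖ ^ 2 * f y ^ 2 := by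
  rw [gradient_mul hφ (hφ.fun_mul hf), gradient_mul hφ hf, norm_add_sq_real]
  simp only [inner_add_left, inner_smul_left, inner_smul_right, smul_add, norm_smul, mul_pow,
    Real.norm_eq_abs, sq_abs, real_inner_self_eq_norm_sq, RCLike.conj_to_real,
    real_inner_comm (∇ f y) (∇ φ y)]
  ring

end Gradient

section Caccioppoli

open scoped Gradient Laplacian InnerProductSpace

variable {E : Type*} [NormedAddCommGroup E] [InnerProductSpace ℝ E] [FiniteDimensional ℝ E]
  {V : Set E} {f : E → ℝ}

theorem laplacian_eq_sum_fderiv_fderiv {ι F : Type*} [Fintype ι] [NormedAddCommGroup F]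
    [NormedSpace ℝ F] {f : E → F} {y : E} (b : OrthonormalBasis ι ℝ E)
    (hf : ContDiffAt ℝ 2 f y) :
    Δ f y = ∑ i, fderiv ℝ (fun z => fderiv ℝ f z (b i)) y (b i) := by
  have hf' : DifferentiableAt ℝ (fderiv ℝ f) y :=
    (hf.fderiv_right (m := 1) (by norm_num)).differentiableAt one_ne_zero
  rw [InnerProductSpace.laplacian_eq_iteratedFDeriv_orthonormalBasis f b]
  refine Finset.sum_congr rfl fun i _ => ?_
  rw [iteratedFDeriv_two_apply, fderiv_clm_apply hf' (differentiableAt_const _)]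
  simp

theorem continuousOn_laplacian (hV : IsOpen V) (hf : ContDiffOn ℝ 2 f V) :
    ContinuousOn (Δ f) V := by
  have hf' (v : E) : ContDiffOn ℝ 1 (fun z => fderiv ℝ f z v) V :=
    (hf.fderiv_of_isOpen hV (by norm_num)).clm_apply contDiffOn_const
  have hcont : ContinuousOn (fun y => ∑ i, fderiv ℝ
      (fun z => fderiv ℝ f z (stdOrthonormalBasis ℝ E i)) y (stdOrthonormalBasis ℝ E i)) V :=
    continuousOn_finsetSum _ fun i _ =>
      ((hf' _).continuousOn_fderiv_of_isOpen hV le_rfl).clm_apply continuousOn_const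
  exact hcont.congr fun y hy =>
    laplacian_eq_sum_fderiv_fderiv _ (hf.contDiffAt (hV.mem_nhds hy))

variable [MeasurableSpace E] [BorelSpace E] {μ : Measure E} [μ.IsAddHaarMeasure] {w φ : E → ℝ}

theorem integral_inner_gradient_eq_neg_integral_mul_laplacian (hV : IsOpen V)
    (hw : ContDiff ℝ 1 w) (hwc : HasCompactSupport w) (hwV : tsupport w ⊆ V)
    (hf : ContDiffOn ℝ 2 f V) :
    ∫ y, ⟪∇ w y, ∇ f y⟫_ℝ ∂μ = -∫ y, w y * Δ f y ∂μ := by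
  let b := stdOrthonormalBasis ℝ E
  have hf' (i) : ContDiffOn ℝ 1 (fun y => fderiv ℝ f y (b i)) V :=
    (hf.fderiv_of_isOpen hV (by norm_num)).clm_apply contDiffOn_const
  have hw' (i) : Continuous fun y => fderiv ℝ w y (b i) :=
    (hw.continuous_fderiv one_ne_zero).clm_apply continuous_const
  have hinner (y) : ⟪∇ w y, ∇ f y⟫_ℝ = ∑ i, fderiv ℝ w y (b i) * fderiv ℝ f y (b i) := by
    rw [← b.sum_inner_mul_inner]
    simp only [inner_gradient_left, inner_gradient_right, RCLike.conj_to_real]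
  have hlap (y) : w y * Δ f y =
      ∑ i, w y * fderiv ℝ (fun z => fderiv ℝ f z (b i)) y (b i) := by
    by_cases hy : y ∈ tsupport w
    · rw [laplacian_eq_sum_fderiv_fderiv b (hf.contDiffAt (hV.mem_nhds (hwV hy))),
        Finset.mul_sum]
    · simp [image_eq_zero_of_notMem_tsupport hy]
  simp_rw [hinner, hlap]
  rw [integral_finsetSum, integral_finsetSum, ← Finset.sum_neg_distrib]
  · exact Finset.sum_congr rfl fun i _ =>
      integral_fderiv_mul_eq_neg_of_tsupport_subset hV hw hwc hwV (hf' i) _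
  · exact fun i _ => integrable_mul_of_tsupport_subset hV hw.continuous hwc hwV
      (((hf' i).continuousOn_fderiv_of_isOpen hV le_rfl).clm_apply continuousOn_const)
  · exact fun i _ => integrable_mul_of_tsupport_subset hV (hw' i) (hwc.fderiv_apply ℝ _)
      ((tsupport_fderiv_apply_subset ℝ _).trans hwV) (hf' i).continuousOn

theorem integrable_norm_gradient_sq (hw : ContDiff ℝ 1 w) (hwc : HasCompactSupport w) :
    Integrable (fun y => ‖∇ w y‖ ^ 2) μ :=
  ((continuous_gradient hw).norm.pow 2).integrable_of_hasCompactSupport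
    (hasCompactSupport_norm_gradient_sq hwc)

theorem integrable_norm_gradient_sq_mul_sq (hV : IsOpen V) (hφ : ContDiff ℝ 1 φ)
    (hφc : HasCompactSupport φ) (hφV : tsupport φ ⊆ V) (hf : ContinuousOn f V) :
    Integrable (fun y => ‖∇ φ y‖ ^ 2 * f y ^ 2) μ :=
  integrable_mul_of_tsupport_subset hV ((continuous_gradient hφ).norm.pow 2)
    (hasCompactSupport_norm_gradient_sq hφc) (tsupport_norm_gradient_sq_subset.trans hφV)
    (hf.pow 2)

theorem integral_norm_gradient_mul_sq (hV : IsOpen V) (hφ : ContDiff ℝ 1 φ)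
    (hφc : HasCompactSupport φ) (hφV : tsupport φ ⊆ V) (hf : ContDiffOn ℝ 2 f V) :
    ∫ y, ‖∇ (fun z => φ z * f z) y‖ ^ 2 ∂μ =
      -∫ y, φ y * (φ y * f y) * Δ f y ∂μ + ∫ y, ‖∇ φ y‖ ^ 2 * f y ^ 2 ∂μ := by
  have hu : ContDiff ℝ 1 fun z => φ z * f z :=
    contDiff_mul_of_tsupport_subset hV hφ hφV (hf.of_le one_le_two)
  have hinner (y) : ⟪∇ (fun z => φ z * (φ z * f z)) y, ∇ f y⟫_ℝ =
      ‖∇ (fun z => φ z * f z) y‖ ^ 2 - ‖∇ φ y‖ ^ 2 * f y ^ 2 := by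
    by_cases hy : y ∈ V
    · rw [norm_gradient_mul_sq (hφ.differentiable one_ne_zero y)
        ((hf.differentiableOn two_ne_zero).differentiableAt (hV.mem_nhds hy)), add_sub_cancel_right]
    · have hφy : y ∉ tsupport φ := fun h => hy (hφV h)
      have hmul (g : E → ℝ) : ∇ (fun z => φ z * g z) y = 0 :=
        gradient_eq_zero_of_notMem_tsupport fun h => hφy (tsupport_mul_subset_left h)
      simp [hmul, gradient_eq_zero_of_notMem_tsupport hφy]
  rw [← integral_inner_gradient_eq_neg_integral_mul_laplacian hV (hφ.mul hu) hφc.mul_right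
    (tsupport_mul_subset_left.trans hφV) hf]
  simp_rw [hinner]
  rw [integral_sub (integrable_norm_gradient_sq hu hφc.mul_right)
    (integrable_norm_gradient_sq_mul_sq hV hφ hφc hφV hf.continuousOn), sub_add_cancel]

theorem caccioppoli_inequality {c M : ℝ} (hc : 0 ≤ c) (hV : IsOpen V) (hφ : ContDiff ℝ 1 φ)
    (hφc : HasCompactSupport φ) (hφV : tsupport φ ⊆ V) (hφ1 : ∀ y, |φ y| ≤ 1)
    (hφM : ∀ y, ‖∇ φ y‖ ≤ M) (hf : ContDiffOn ℝ 2 f V)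
    (hfint : IntegrableOn (fun y => f y ^ 2) V μ) (hf0 : ∀ y ∈ V, 0 ≤ f y)
    (hsub : ∀ y ∈ V, -Δ f y ≤ c * f y) :
    ∫ y, ‖∇ (fun z => φ z * f z) y‖ ^ 2 ∂μ ≤ (c + M ^ 2) * ∫ y in V, f y ^ 2 ∂μ := by
  have hu : ContDiff ℝ 1 fun z => φ z * f z :=
    contDiff_mul_of_tsupport_subset hV hφ hφV (hf.of_le one_le_two)
  have hw := integrable_mul_of_tsupport_subset (μ := μ) hV (hφ.mul hu).continuous hφc.mul_right
    (tsupport_mul_subset_left.trans hφV) (continuousOn_laplacian hV hf)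
  have hgrad := integrable_norm_gradient_sq_mul_sq (μ := μ) hV hφ hφc hφV hf.continuousOn
  have hbound (y) (hy : y ∈ V) :
      -(φ y * (φ y * f y) * Δ f y) + ‖∇ φ y‖ ^ 2 * f y ^ 2 ≤ (c + M ^ 2) * f y ^ 2 := by
    have hφsq : φ y ^ 2 ≤ 1 := (sq_le_one_iff_abs_le_one _).2 (hφ1 y)
    calc -(φ y * (φ y * f y) * Δ f y) + ‖∇ φ y‖ ^ 2 * f y ^ 2
        = φ y ^ 2 * (f y * -Δ f y) + ‖∇ φ y‖ ^ 2 * f y ^ 2 := by ring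
      _ ≤ φ y ^ 2 * (f y * (c * f y)) + M ^ 2 * f y ^ 2 := by
        gcongr
        exacts [hf0 y hy, hsub y hy, hφM y]
      _ = φ y ^ 2 * (c * f y ^ 2) + M ^ 2 * f y ^ 2 := by ring
      _ ≤ 1 * (c * f y ^ 2) + M ^ 2 * f y ^ 2 := by gcongr
      _ = (c + M ^ 2) * f y ^ 2 := by ring
  have hzero (y) (hy : y ∉ V) : -(φ y * (φ y * f y) * Δ f y) + ‖∇ φ y‖ ^ 2 * f y ^ 2 = 0 := by
    have hφy : y ∉ tsupport φ := fun h => hy (hφV h)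
    simp [gradient_eq_zero_of_notMem_tsupport hφy, image_eq_zero_of_notMem_tsupport hφy]
  rw [integral_norm_gradient_mul_sq hV hφ hφc hφV hf, ← integral_neg,
    ← integral_add hw.fun_neg hgrad, ← setIntegral_eq_integral_of_forall_compl_eq_zero hzero,
    ← integral_const_mul]
  exact setIntegral_mono_on (hw.fun_neg.add hgrad).integrableOn (hfint.const_mul _) hV.measurableSet
    hbound

end Caccioppoli

section Sobolev

open Module

variable {E F : Type*} [NormedAddCommGroup E] [NormedSpace ℝ E] [FiniteDimensional ℝ E]
  [MeasurableSpace E] [BorelSpace E] {μ : Measure E} [μ.IsAddHaarMeasure]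
  [NormedAddCommGroup F] [InnerProductSpace ℝ F] {u : E → F}

theorem integral_norm_rpow_le_integral_norm_fderiv_rpow {p q : ℝ} (hp : 1 ≤ p) (hq : 0 < q)
    (hE : 0 < finrank ℝ E) (hpq : q⁻¹ = p⁻¹ - (finrank ℝ E : ℝ)⁻¹) (hu : ContDiff ℝ 1 u)
    (huc : HasCompactSupport u) :
    (∫ y, ‖u y‖ ^ q ∂μ) ^ q⁻¹ ≤
      eLpNormLESNormFDerivOfEqInnerConst μ p * (∫ y, ‖fderiv ℝ u y‖ ^ p ∂μ) ^ p⁻¹ := by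
  lift p to NNReal using zero_le_one.trans hp
  lift q to NNReal using hq.le
  have hp0 : p ≠ 0 := (zero_lt_one.trans_le (by exact_mod_cast hp)).ne'
  have hq0 : q ≠ 0 := by exact_mod_cast hq.ne'
  have hsob := eLpNorm_le_eLpNorm_fderiv_of_eq_inner μ hu huc (by exact_mod_cast hp) hE
    (by exact_mod_cast hpq)
  have hmem : MemLp u q μ := hu.continuous.memLp_of_hasCompactSupport huc
  have hmem' : MemLp (fderiv ℝ u) p μ :=
    (hu.continuous_fderiv one_ne_zero).memLp_of_hasCompactSupport (huc.fderiv ℝ)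
  rw [hmem.eLpNorm_eq_integral_rpow_norm (by simpa using hq0) (by simp),
    hmem'.eLpNorm_eq_integral_rpow_norm (by simpa using hp0) (by simp),
    ← ENNReal.ofReal_coe_nnreal (p := eLpNormLESNormFDerivOfEqInnerConst μ p),
    ← ENNReal.ofReal_mul (by positivity),
    ENNReal.ofReal_le_ofReal_iff (by positivity)] at hsob
  simpa using hsob

theorem integral_norm_rpow_le_integral_norm_fderiv_sq (hE : 3 ≤ finrank ℝ E)
    (hu : ContDiff ℝ 1 u) (huc : HasCompactSupport u) :
    (∫ y, ‖u y‖ ^ (2 * ((finrank ℝ E : ℝ) / (finrank ℝ E - 2))) ∂μ) ^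
        ((finrank ℝ E : ℝ) / (finrank ℝ E - 2))⁻¹ ≤
      eLpNormLESNormFDerivOfEqInnerConst μ 2 ^ 2 * ∫ y, ‖fderiv ℝ u y‖ ^ 2 ∂μ := by
  have hn : (2 : ℝ) < finrank ℝ E := by exact_mod_cast hE
  have hn2 : (0 : ℝ) < finrank ℝ E - 2 := sub_pos.2 hn
  set γ : ℝ := (finrank ℝ E : ℝ) / (finrank ℝ E - 2) with hγ
  have hγ0 : 0 < γ := by positivity
  have hexp : (2 * γ)⁻¹ = 2⁻¹ - (finrank ℝ E : ℝ)⁻¹ := by rw [hγ]; field_simp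
  have hsob := integral_norm_rpow_le_integral_norm_fderiv_rpow (μ := μ) one_le_two
    (by positivity) (by omega) hexp hu huc
  have hI : 0 ≤ ∫ y, ‖u y‖ ^ (2 * γ) ∂μ := by positivity
  simp only [Real.rpow_two, ← one_div (2 : ℝ), ← Real.sqrt_eq_rpow] at hsob
  calc (∫ y, ‖u y‖ ^ (2 * γ) ∂μ) ^ γ⁻¹
      = ((∫ y, ‖u y‖ ^ (2 * γ) ∂μ) ^ (2 * γ)⁻¹) ^ 2 := by
        rw [← Real.rpow_mul_natCast hI]
        congr 1
        push_cast
        field_simp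
    _ ≤ (eLpNormLESNormFDerivOfEqInnerConst μ 2 * √(∫ y, ‖fderiv ℝ u y‖ ^ 2 ∂μ)) ^ 2 := by
        gcongr
    _ = eLpNormLESNormFDerivOfEqInnerConst μ 2 ^ 2 * ∫ y, ‖fderiv ℝ u y‖ ^ 2 ∂μ := by
        rw [mul_pow, Real.sq_sqrt (by positivity)]

end Sobolev

theorem exists_lipschitzWith_smoothTransition : ∃ K, LipschitzWith K Real.smoothTransition := by
  obtain ⟨K, hK⟩ := (Real.smoothTransition.contDiff (n := 1)).contDiffOn.exists_lipschitzOnWith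
    one_ne_zero (convex_Icc 0 1) isCompact_Icc
  have hproj := hK.to_restrict.comp (LipschitzWith.projIcc zero_le_one)
  exact ⟨K, by simpa [Function.comp_def] using hproj⟩

/-- The radial cutoff between the concentric balls of radii `r < s` about `x`: it equals `1` on the
inner ball, vanishes outside the outer one, and has gradient `O(1 / (s - r))`. For `s ≤ r` the value
is junk. -/
noncomputable def radialCutoff {X : Type*} [PseudoMetricSpace X] (x : X) (r s : ℝ) (y : X) : ℝ :=
  Real.smoothTransition ((s - dist y x) / (s - r))

section RadialCutoff

open scoped Gradient

variable {X : Type*} [PseudoMetricSpace X] {x y : X} {r s : ℝ}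

theorem abs_radialCutoff_le_one : |radialCutoff x r s y| ≤ 1 :=
  abs_le.2 ⟨neg_one_lt_zero.le.trans (Real.smoothTransition.nonneg _),
    Real.smoothTransition.le_one _⟩

theorem radialCutoff_eq_one (hrs : r < s) (hy : y ∈ closedBall x r) :
    radialCutoff x r s y = 1 :=
  Real.smoothTransition.one_of_one_le <|
    (one_le_div (sub_pos.2 hrs)).2 (sub_le_sub_left (mem_closedBall.1 hy) s)

theorem tsupport_radialCutoff_subset (hrs : r < s) :
    tsupport (radialCutoff x r s) ⊆ closedBall x s := by
  refine (closure_mono fun y hy => ?_).trans closure_ball_subset_closedBall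
  contrapose! hy
  exact Function.notMem_support.2 <| Real.smoothTransition.zero_of_nonpos <|
    div_nonpos_of_nonpos_of_nonneg (by simpa using hy) (sub_pos.2 hrs).le

theorem lipschitzWith_radialCutoff {K : NNReal} (hK : LipschitzWith K Real.smoothTransition) :
    LipschitzWith (K * ‖(s - r)⁻¹‖₊) (radialCutoff x r s) := by
  have hdist : LipschitzWith ‖(s - r)⁻¹‖₊ fun y => (s - dist y x) / (s - r) := by
    refine LipschitzWith.of_dist_le_mul fun y z => ?_
    calc dist ((s - dist y x) / (s - r)) ((s - dist z x) / (s - r))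
        = |(s - r)⁻¹| * |dist z x - dist y x| := by
          rw [Real.dist_eq, ← abs_mul]
          ring_nf
      _ ≤ |(s - r)⁻¹| * dist y z := by
          rw [dist_comm y z]
          gcongr
          exact abs_dist_sub_le z y x
  exact hK.comp hdist

theorem contDiff_radialCutoff {E : Type*} [NormedAddCommGroup E] [InnerProductSpace ℝ E]
    {k : ℕ∞} (x : E) (hr : 0 < r) (hrs : r < s) : ContDiff ℝ k (radialCutoff x r s) := by
  refine contDiff_iff_contDiffAt.2 fun y => ?_
  rcases eq_or_ne y x with rfl | hyx
  · refine (contDiffAt_const (c := (1 : ℝ))).congr_of_eventuallyEq ?_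
    filter_upwards [closedBall_mem_nhds y hr] with z hz using radialCutoff_eq_one hrs hz
  · have hdist : ContDiffAt ℝ k (fun z => dist z x) y :=
      contDiffAt_id.dist ℝ contDiffAt_const hyx
    exact Real.smoothTransition.contDiffAt.comp y ((contDiffAt_const.sub hdist).div_const _)

theorem exists_norm_gradient_radialCutoff_le (E : Type*) [NormedAddCommGroup E]
    [InnerProductSpace ℝ E] [CompleteSpace E] : ∃ K : ℝ, ∀ (x : E) (r s : ℝ), r < s →
      ∀ y, ‖∇ (radialCutoff x r s) y‖ ≤ K / (s - r) := by
  obtain ⟨K, hK⟩ := exists_lipschitzWith_smoothTransition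
  refine ⟨K, fun x r s hrs y => ?_⟩
  rw [norm_gradient]
  refine (norm_fderiv_le_of_lipschitz ℝ (lipschitzWith_radialCutoff hK)).trans_eq ?_
  simp [abs_of_pos (sub_pos.2 hrs), div_eq_mul_inv]

end RadialCutoff

section ReverseHolder

open Module
open scoped Gradient Laplacian

variable {E : Type*} [NormedAddCommGroup E] [InnerProductSpace ℝ E] [FiniteDimensional ℝ E]
  [MeasurableSpace E] [BorelSpace E] {μ : Measure E} [μ.IsAddHaarMeasure]

theorem reverse_holder_of_cutoff {V B : Set E} {f φ : E → ℝ} {c M : ℝ} (hE : 3 ≤ finrank ℝ E)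
    (hc : 0 ≤ c) (hV : IsOpen V) (hB : MeasurableSet B) (hBV : B ⊆ V) (hφ : ContDiff ℝ 1 φ)
    (hφc : HasCompactSupport φ) (hφV : tsupport φ ⊆ V) (hφ1 : ∀ y, |φ y| ≤ 1)
    (hφB : ∀ y ∈ B, φ y = 1) (hφM : ∀ y, ‖∇ φ y‖ ≤ M) (hf : ContDiffOn ℝ 2 f V)
    (hfint : IntegrableOn (fun y => f y ^ 2) V μ) (hf0 : ∀ y ∈ V, 0 ≤ f y)
    (hsub : ∀ y ∈ V, -Δ f y ≤ c * f y) :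
    (∫ y in B, f y ^ (2 * ((finrank ℝ E : ℝ) / (finrank ℝ E - 2))) ∂μ) ^
        ((finrank ℝ E : ℝ) / (finrank ℝ E - 2))⁻¹ ≤
      eLpNormLESNormFDerivOfEqInnerConst μ 2 ^ 2 * ((c + M ^ 2) * ∫ y in V, f y ^ 2 ∂μ) := by
  have hn : (0 : ℝ) < finrank ℝ E - 2 := sub_pos.2 (by exact_mod_cast hE)
  have hγ : (0 : ℝ) < (finrank ℝ E : ℝ) / (finrank ℝ E - 2) :=
    div_pos (by exact_mod_cast zero_lt_three.trans_le hE) hn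
  have hu : ContDiff ℝ 1 fun y => φ y * f y :=
    contDiff_mul_of_tsupport_subset hV hφ hφV (hf.of_le one_le_two)
  have hfB (y) (hy : y ∈ B) : 0 ≤ f y := hf0 y (hBV hy)
  have hle := setIntegral_rpow_le_integral_norm_rpow (μ := μ) (mul_pos two_pos hγ) hB
    hu.continuous hφc.mul_right (fun y hy => by simp [hφB y hy]) hfB
  have hnonneg := setIntegral_nonneg (μ := μ) hB fun y hy => Real.rpow_nonneg (hfB y hy)
    (2 * ((finrank ℝ E : ℝ) / (finrank ℝ E - 2)))
  have hsobolev := integral_norm_rpow_le_integral_norm_fderiv_sq (μ := μ) hE hu hφc.mul_right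
  simp only [← norm_gradient] at hsobolev
  refine (Real.rpow_le_rpow hnonneg hle (inv_pos.2 hγ).le).trans (hsobolev.trans ?_)
  gcongr
  exact caccioppoli_inequality hc hV hφ hφc hφV hφ1 hφM hf hfint hf0 hsub

variable (μ) in
theorem reverse_holder_one_step_general (hE : 3 ≤ finrank ℝ E) :
    ∃ A : ℝ, 0 < A ∧ ∀ c : ℝ, 0 ≤ c → ∀ (x : E) (r R : ℝ), 0 < r → r < R → ∀ f : E → ℝ,
      ContDiffOn ℝ 2 f (ball x R) → IntegrableOn (fun y => f y ^ 2) (ball x R) μ →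
      (∀ y ∈ ball x R, 0 ≤ f y) → (∀ y ∈ ball x R, -Δ f y ≤ c * f y) →
      (∫ y in ball x r, f y ^ (2 * ((finrank ℝ E : ℝ) / (finrank ℝ E - 2))) ∂μ) ^
          ((finrank ℝ E : ℝ) / (finrank ℝ E - 2))⁻¹ ≤
        A * (c + 1 / (R - r) ^ 2) * ∫ y in ball x R, f y ^ 2 ∂μ := by
  obtain ⟨K, hK⟩ := exists_norm_gradient_radialCutoff_le E
  set C := eLpNormLESNormFDerivOfEqInnerConst μ 2
  refine ⟨C ^ 2 * (1 + 4 * K ^ 2) + 1, by positivity, ?_⟩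
  intro c hc x r R hr hrR f hf hfint hf0 hsub
  have hrs : r < (r + R) / 2 := left_lt_add_div_two.2 hrR
  have hsupp : tsupport (radialCutoff x r ((r + R) / 2)) ⊆ closedBall x ((r + R) / 2) :=
    tsupport_radialCutoff_subset hrs
  have hmain := reverse_holder_of_cutoff hE hc isOpen_ball measurableSet_ball
    (ball_subset_ball hrR.le) (contDiff_radialCutoff (k := 1) x hr hrs)
    ((isCompact_closedBall x _).of_isClosed_subset (isClosed_tsupport _) hsupp)
    (hsupp.trans (closedBall_subset_ball (add_div_two_lt_right.2 hrR)))
    (fun _ => abs_radialCutoff_le_one)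
    (fun y hy => radialCutoff_eq_one hrs (ball_subset_closedBall hy)) (hK x r _ hrs)
    hf hfint hf0 hsub
  have hM : (K / ((r + R) / 2 - r)) ^ 2 = 4 * K ^ 2 * (1 / (R - r) ^ 2) := by
    rw [show (r + R) / 2 - r = (R - r) / 2 by ring]
    field_simp
    norm_num
  have hconst : C ^ 2 * (c + 4 * K ^ 2 * (1 / (R - r) ^ 2)) ≤
      (C ^ 2 * (1 + 4 * K ^ 2) + 1) * (c + 1 / (R - r) ^ 2) := by
    have hd : 0 ≤ 1 / (R - r) ^ 2 := by positivity
    have hCd : 0 ≤ (C : ℝ) ^ 2 * (1 / (R - r) ^ 2) := by positivity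
    have hCKc : 0 ≤ (C : ℝ) ^ 2 * K ^ 2 * c := by positivity
    linarith
  rw [hM, ← mul_assoc] at hmain
  exact hmain.trans (mul_le_mul_of_nonneg_right hconst (by positivity))

end ReverseHolder

theorem lap_eq_laplacian {n : ℕ} {f : EuclideanSpace ℝ (Fin n) → ℝ}
    {y : EuclideanSpace ℝ (Fin n)} (hf : ContDiffAt ℝ 2 f y) :
    lap f y = Laplacian.laplacian f y := by
  simp only [laplacian_eq_sum_fderiv_fderiv (EuclideanSpace.basisFun (Fin n) ℝ) hf,
    EuclideanSpace.basisFun_apply, lap]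

theorem add_one_div_sq_le {c d : ℝ} (hc : 0 ≤ c) (hd : 0 < d) (hd1 : d ≤ 1) :
    c + 1 / d ^ 2 ≤ (c + 1) / d ^ 2 := by
  rw [add_div]
  gcongr
  exact le_div_self hc (by positivity) (pow_le_one₀ hd.le hd1)

/-- One-step reverse-Hölder estimate for nonnegative subsolutions of `-Δf ≤ c f`:
with `γ = n/(n-2)`, `(∫_{B(x,r)} f^{2γ})^{1/γ} ≤ (A₂/(R-r)²) ∫_{B(x,R)} f²`,
where `A₂` depends only on `n` and `c`. -/
theorem reverse_holder_one_step (n : ℕ) (hn : 3 ≤ n) (c : ℝ) (hc : 0 ≤ c) :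
    ∃ A₂ : ℝ, 0 < A₂ ∧
      ∀ (x : EuclideanSpace ℝ (Fin n)) (r R : ℝ), 0 < r → r < R → R ≤ 1 →
        ∀ (f : EuclideanSpace ℝ (Fin n) → ℝ) (U : Set (EuclideanSpace ℝ (Fin n))),
          IsOpen U → closedBall x R ⊆ U → ContDiffOn ℝ (⊤ : ℕ∞) f U →
          (∀ y ∈ U, 0 ≤ f y) →
          (∀ y ∈ ball x R, -lap f y ≤ c * f y) →
          (∫ y in ball x r, f y ^ (2 * ((n : ℝ) / (n - 2)))) ^ (((n : ℝ) / (n - 2))⁻¹)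
            ≤ A₂ / (R - r) ^ 2 * ∫ y in ball x R, f y ^ 2 := by
  obtain ⟨A, hA, hgeneral⟩ :=
    reverse_holder_one_step_general (E := EuclideanSpace ℝ (Fin n)) volume (by simpa using hn)
  simp only [finrank_euclideanSpace_fin] at hgeneral
  refine ⟨A * (c + 1), by positivity, fun x r R hr hrR hR1 f U _ hxU hf hf0 hsub => ?_⟩
  have hball : ball x R ⊆ U := ball_subset_closedBall.trans hxU
  have hf2 : ContDiffOn ℝ 2 f (ball x R) := (contDiffOn_infty.1 hf 2).mono hball
  have hfint : IntegrableOn (fun y => f y ^ 2) (ball x R) :=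
    (((hf.continuousOn.mono hxU).pow 2).integrableOn_compact
      (isCompact_closedBall x R)).mono_set ball_subset_closedBall
  have hsub' (y) (hy : y ∈ ball x R) : -Laplacian.laplacian f y ≤ c * f y := by
    rw [← lap_eq_laplacian (hf2.contDiffAt (isOpen_ball.mem_nhds hy))]
    exact hsub y hy
  refine (hgeneral c hc x r R hr hrR f hf2 hfint (fun y hy => hf0 y (hball hy)) hsub').trans ?_
  rw [mul_div_assoc]
  gcongr
  exact add_one_div_sq_le hc (sub_pos.2 hrR) (by linarith)
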